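/- arXiv:2603.25074 — 4 statements merged into one kernel-verified Lean document; each statement's English description precedes it below -/
import Mathlib

section
/- Fix vectors g, h in a real Hilbert space E with h ≠ 0, and a real number ε, and suppose ⟪g, h⟫ < −ε (the conflict case). Let λ* = (−⟪g, h⟫ − ε)/‖h‖² and d* = g + λ*·h. Then λ* > 0, the constraint is active at d*, i.e. ⟪h, d*⟫ = −ε, and d* maximizes the objective d ↦ ⟪g, d⟫ − ½‖d‖² over the feasible set {d ∈ E : ⟪h, d⟫ ≥ −ε}. -/
open RealInnerProductSpace

/-!
The gradient of the objective at `g + v` is `-v`, so completing the square shows that moving from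
`g + v` to `d` costs `½‖g + v - d‖² + ⟪v, d - (g + v)⟫`. For `v = l • h` with `0 ≤ l` the linear
term is nonnegative as soon as `⟪h, g + l • h⟫ ≤ ⟪h, d⟫`. The multiplier `λ*` is the value of `l`
that puts `g + l • h` on the hyperplane `⟪h, d⟫ = -ε`, so this covers every feasible `d`.
-/

section

variable {E : Type*} [SeminormedAddCommGroup E] [InnerProductSpace ℝ E]

/-- The objective `d ↦ ⟪g, d⟫ - ½‖d‖²` of the update-direction problem with erasure gradient `g`. -/
noncomputable def updateObjective (g d : E) : ℝ :=
  ⟪g, d⟫ - (1 / 2) * ‖d‖ ^ 2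

theorem updateObjective_add_sub_updateObjective (g v d : E) :
    updateObjective g (g + v) - updateObjective g d =
      (1 / 2) * ‖g + v - d‖ ^ 2 + ⟪v, d - (g + v)⟫ := by
  have inner_eq (x : E) : ⟪g, x⟫ = ⟪g + v, x⟫ - ⟪v, x⟫ := by
    rw [inner_add_left, add_sub_cancel_right]
  rw [updateObjective, updateObjective, inner_eq (g + v), inner_eq d, real_inner_self_eq_norm_sq,
    norm_sub_sq_real, inner_sub_right]
  ring

theorem updateObjective_le_of_inner_le {g h d : E} {l : ℝ} (hl : 0 ≤ l)
    (hd : ⟪h, g + l • h⟫ ≤ ⟪h, d⟫) :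
    updateObjective g d ≤ updateObjective g (g + l • h) := by
  have linear_nonneg : 0 ≤ ⟪l • h, d - (g + l • h)⟫ := by
    rw [real_inner_smul_left, inner_sub_right]
    exact mul_nonneg hl (sub_nonneg.mpr hd)
  rw [← sub_nonneg, updateObjective_add_sub_updateObjective]
  exact add_nonneg (by positivity) linear_nonneg

theorem inner_add_div_norm_sq_smul (g : E) {h : E} (hh : ‖h‖ ≠ 0) (c : ℝ) :
    ⟪h, g + ((c - ⟪g, h⟫) / ‖h‖ ^ 2) • h⟫ = c := by
  rw [inner_add_right, real_inner_smul_right, real_inner_self_eq_norm_sq,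
    div_mul_cancel₀ _ (pow_ne_zero 2 hh), real_inner_comm, add_sub_cancel]

theorem conflict_optimal_general {g h : E} (hh : ‖h‖ ≠ 0) {ε : ℝ} (hconf : ⟪g, h⟫ < -ε)
    {lamStar : ℝ} (hlam : lamStar = (-⟪g, h⟫ - ε) / ‖h‖ ^ 2)
    {dStar : E} (hd : dStar = g + lamStar • h) :
    0 < lamStar ∧
      ⟪h, dStar⟫ = -ε ∧
      ∀ d : E, ⟪h, d⟫ ≥ -ε → updateObjective g d ≤ updateObjective g dStar := by
  have lam_pos : 0 < lamStar := by
    rw [hlam]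
    exact div_pos (by linarith) (by positivity)
  have active : ⟪h, dStar⟫ = -ε := by
    rw [hd, hlam, neg_sub_comm]
    exact inner_add_div_norm_sq_smul g hh (-ε)
  refine ⟨lam_pos, active, fun d feasible => ?_⟩
  subst hd
  exact updateObjective_le_of_inner_le lam_pos.le (active.trans_le feasible)

end

/-- Conflict case: if `⟪g, h⟫ < −ε` and `h ≠ 0`, then `λ* = (−⟪g,h⟫ − ε)/‖h‖² > 0`,
the constraint is active at `d* = g + λ*•h`, i.e. `⟪h, d*⟫ = −ε`, and `d*` maximizes
`⟪g, d⟫ − ½‖d‖²` over the feasible set `{d : ⟪h, d⟫ ≥ −ε}`. -/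
theorem conflict_optimal
    {E : Type*} [NormedAddCommGroup E] [InnerProductSpace ℝ E] [CompleteSpace E]
    (g h : E) (hh : h ≠ 0) (ε : ℝ) (hconf : ⟪g, h⟫ < -ε)
    (lamStar : ℝ) (hlam : lamStar = (-⟪g, h⟫ - ε) / ‖h‖ ^ 2)
    (dStar : E) (hd : dStar = g + lamStar • h) :
    0 < lamStar ∧
      ⟪h, dStar⟫ = -ε ∧
      ∀ d : E, ⟪h, d⟫ ≥ -ε →
        ⟪g, d⟫ - (1 / 2) * ‖d‖ ^ 2 ≤ ⟪g, dStar⟫ - (1 / 2) * ‖dStar‖ ^ 2 :=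
  conflict_optimal_general (norm_ne_zero_iff.mpr hh) hconf hlam hd
end

section
/- Fix vectors g, h in a real Hilbert space E with h ≠ 0, and a real number ε, and suppose ⟪g, h⟫ < −ε. Let λ* = (−⟪g, h⟫ − ε)/‖h‖² and d* = g + λ*·h. Then strong duality holds: the value of the primal objective at the optimizer equals the value of the dual objective at λ*, i.e. ⟪g, d*⟫ − ½‖d*‖² = ½‖g + λ*·h‖² + λ*·ε. -/
/-! For every multiplier `t` and every direction `d`, completing the square writes the gap between
the dual objective at `t` and the primal objective at `d` as
`½‖g + t • h - d‖² + t * (⟪h, d⟫ + ε)`. Taking `d = g + t • h` removes the square, and `λ*` is the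
multiplier for which this direction makes the constraint `⟪h, d⟫ ≥ -ε` active, which removes the
complementary slackness term. -/

open RealInnerProductSpace

section DirectionDuality

variable {E : Type*} [NormedAddCommGroup E] [InnerProductSpace ℝ E]

/-- The objective of the constrained update-direction problem, maximized over the directions `d`
with `⟪h, d⟫ ≥ -ε`; the constraint is not part of the definition. -/
noncomputable def primalObjective (g d : E) : ℝ :=
  ⟪g, d⟫ - (1 / 2) * ‖d‖ ^ 2

/-- The Lagrangian dual objective `L` of the constrained update-direction problem, at the
multiplier `t`, which is allowed to be any real number. -/
noncomputable def dualObjective (g h : E) (ε t : ℝ) : ℝ :=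
  (1 / 2) * ‖g + t • h‖ ^ 2 + t * ε

theorem dualObjective_sub_primalObjective (g h d : E) (ε t : ℝ) :
    dualObjective g h ε t - primalObjective g d =
      (1 / 2) * ‖g + t • h - d‖ ^ 2 + t * (⟪h, d⟫ + ε) := by
  have inner_split : ⟪g + t • h, d⟫ = ⟪g, d⟫ + t * ⟪h, d⟫ := by
    rw [inner_add_left, real_inner_smul_left]
  rw [dualObjective, primalObjective, norm_sub_sq_real, inner_split]
  ring

theorem primalObjective_eq_dualObjective_of_inner_eq {g h : E} {ε t : ℝ}
    (active : ⟪h, g + t • h⟫ = -ε) :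
    primalObjective g (g + t • h) = dualObjective g h ε t := by
  have gap_eq_zero : dualObjective g h ε t - primalObjective g (g + t • h) = 0 := by
    simp [dualObjective_sub_primalObjective, active]
  exact (sub_eq_zero.mp gap_eq_zero).symm

theorem inner_add_smul_self_eq_iff {h : E} (hh : h ≠ 0) (g : E) (t c : ℝ) :
    ⟪h, g + t • h⟫ = c ↔ t = (c - ⟪g, h⟫) / ‖h‖ ^ 2 := by
  have norm_sq_ne_zero : ‖h‖ ^ 2 ≠ 0 := pow_ne_zero 2 (norm_ne_zero_iff.mpr hh)
  rw [inner_add_right, real_inner_smul_right, real_inner_self_eq_norm_sq, real_inner_comm,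
    eq_div_iff norm_sq_ne_zero, eq_sub_iff_add_eq']

theorem strong_duality_general (g h : E) (hh : h ≠ 0) (ε : ℝ)
    (lamStar : ℝ) (hlam : lamStar = (-⟪g, h⟫ - ε) / ‖h‖ ^ 2)
    (dStar : E) (hd : dStar = g + lamStar • h) :
    primalObjective g dStar = dualObjective g h ε lamStar := by
  have active : ⟪h, g + lamStar • h⟫ = -ε := by
    rw [inner_add_smul_self_eq_iff hh, hlam, neg_sub_comm]
  rw [hd, primalObjective_eq_dualObjective_of_inner_eq active]

end DirectionDuality

/-- Strong duality in the conflict case: with `λ* = (−⟪g,h⟫ − ε)/‖h‖²` and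
`d* = g + λ*•h`, the primal value `⟪g, d*⟫ − ½‖d*‖²` equals the dual value
`½‖g + λ*•h‖² + λ*ε`. -/
theorem strong_duality
    {E : Type*} [NormedAddCommGroup E] [InnerProductSpace ℝ E] [CompleteSpace E]
    (g h : E) (hh : h ≠ 0) (ε : ℝ) (hconf : ⟪g, h⟫ < -ε)
    (lamStar : ℝ) (hlam : lamStar = (-⟪g, h⟫ - ε) / ‖h‖ ^ 2)
    (dStar : E) (hd : dStar = g + lamStar • h) :
    ⟪g, dStar⟫ - (1 / 2) * ‖dStar‖ ^ 2
      = (1 / 2) * ‖g + lamStar • h‖ ^ 2 + lamStar * ε :=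
  strong_duality_general g h hh ε lamStar hlam dStar hd
end

section
/- Let f : E → ℝ be differentiable on a real Hilbert space E with G-Lipschitz gradient (G ≥ 0). Let α ≥ 0, ε ∈ ℝ, C ≥ 0, and let θ : ℕ → E and d : ℕ → E be sequences such that for every t, θ_{t+1} = θ_t − α·d_t, ⟪∇f(θ_t), d_t⟫ ≥ −ε, and ‖d_t‖ ≤ C. Then for every T ∈ ℕ, f(θ_T) − f(θ_0) ≤ T·(α·ε + (G·α²·C²)/2). -/
open RealInnerProductSpace

/-!
The preservation constraint bounds the first-order change of `f` along the step `-α • d` by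
`α * ε`, and the Lipschitz bound on the derivative controls the remainder by the quadratic term
`G / 2 * ‖α • d‖ ^ 2`. Summing this one-step estimate over the iterates telescopes.
-/

theorem le_quadratic_of_deriv_right_le_affine {g g' : ℝ → ℝ} {a b m L : ℝ} (hab : a ≤ b)
    (hcont : ContinuousOn g (Set.Icc a b))
    (hderiv : ∀ s ∈ Set.Ico a b, HasDerivWithinAt g (g' s) (Set.Ici s) s)
    (hle : ∀ s ∈ Set.Ico a b, g' s ≤ m + L * (s - a)) :
    g b ≤ g a + m * (b - a) + L / 2 * (b - a) ^ 2 := by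
  let q : ℝ → ℝ := fun s => g a + m * (s - a) + L / 2 * (s - a) ^ 2
  have hq (s : ℝ) : HasDerivAt q (m + L * (s - a)) s := by
    have hsub : HasDerivAt (fun s => s - a) 1 s := (hasDerivAt_id s).sub_const a
    refine (((hsub.const_mul m).const_add (g a)).add
      ((hsub.pow 2).const_mul (L / 2))).congr_deriv ?_
    push_cast
    ring
  exact image_le_of_deriv_right_le_deriv_boundary (B := q) hcont hderiv (by simp [q])
    (fun s _ => (hq s).continuousAt.continuousWithinAt)
    (fun s _ => (hq s).hasDerivWithinAt) hle (Set.right_mem_Icc.2 hab)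

section NormedSpace

variable {E : Type*} [NormedAddCommGroup E] [NormedSpace ℝ E]
  {f : E → ℝ} {f' : E → StrongDual ℝ E} {G : ℝ}

theorem le_quadratic_of_fderivWithin_lipschitz_segment {x y : E}
    (hf : ∀ z ∈ segment ℝ x y, HasFDerivWithinAt f (f' z) (segment ℝ x y) z)
    (hlip : ∀ z ∈ segment ℝ x y, ‖f' z - f' x‖ ≤ G * ‖z - x‖) :
    f y ≤ f x + f' x (y - x) + G / 2 * ‖y - x‖ ^ 2 := by
  let γ : ℝ → E := AffineMap.lineMap x y
  have hγ : Set.MapsTo γ (Set.Icc 0 1) (segment ℝ x y) := by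
    rw [segment_eq_image_lineMap]
    exact Set.mapsTo_image γ _
  have hderiv : ∀ s ∈ Set.Icc (0 : ℝ) 1,
      HasDerivWithinAt (f ∘ γ) (f' (γ s) (y - x)) (Set.Icc 0 1) s := fun s hs =>
    (hf _ (hγ hs)).comp_hasDerivWithinAt s AffineMap.hasDerivWithinAt_lineMap hγ
  have hslope : ∀ s ∈ Set.Ico (0 : ℝ) 1,
      f' (γ s) (y - x) ≤ f' x (y - x) + G * ‖y - x‖ ^ 2 * (s - 0) := by
    intro s hs
    have hdist : ‖γ s - x‖ = s * ‖y - x‖ := by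
      simp [γ, AffineMap.lineMap_apply_module', norm_smul, abs_of_nonneg hs.1]
    rw [← sub_le_iff_le_add']
    calc f' (γ s) (y - x) - f' x (y - x) = (f' (γ s) - f' x) (y - x) := rfl
      _ ≤ ‖f' (γ s) - f' x‖ * ‖y - x‖ := (le_abs_self _).trans ((f' (γ s) - f' x).le_opNorm _)
      _ ≤ G * (s * ‖y - x‖) * ‖y - x‖ := by
        gcongr
        exact hdist ▸ hlip _ (hγ (Set.Ico_subset_Icc_self hs))
      _ = G * ‖y - x‖ ^ 2 * (s - 0) := by ring
  have hquad := le_quadratic_of_deriv_right_le_affine zero_le_one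
    (fun s hs => (hderiv s hs).continuousWithinAt)
    (fun s hs => (hderiv s (Set.Ico_subset_Icc_self hs)).mono_of_mem_nhdsWithin
      (Icc_mem_nhdsGE_of_mem hs)) hslope
  calc f y ≤ f x + f' x (y - x) * (1 - 0) + G * ‖y - x‖ ^ 2 / 2 * (1 - 0) ^ 2 := by
        simpa only [γ, Function.comp_apply, AffineMap.lineMap_apply_zero,
          AffineMap.lineMap_apply_one] using hquad
    _ = f x + f' x (y - x) + G / 2 * ‖y - x‖ ^ 2 := by ring

theorem sub_smul_sub_le_of_neg_le_fderivWithin {s : Set E} (hs : Convex ℝ s) (hG : 0 ≤ G)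
    (hf : ∀ x ∈ s, HasFDerivWithinAt f (f' x) s x)
    (hlip : ∀ x ∈ s, ∀ y ∈ s, ‖f' x - f' y‖ ≤ G * ‖x - y‖)
    {α ε C : ℝ} (hα : 0 ≤ α) {x d : E} (hx : x ∈ s) (hxd : x - α • d ∈ s)
    (hfeas : -ε ≤ f' x d) (hd : ‖d‖ ≤ C) :
    f (x - α • d) - f x ≤ α * ε + G * α ^ 2 * C ^ 2 / 2 := by
  have hseg : segment ℝ x (x - α • d) ⊆ s := hs.segment_subset hx hxd
  have hdescent : f (x - α • d) ≤ f x - α * f' x d + G / 2 * (α * ‖d‖) ^ 2 := by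
    simpa [norm_smul, abs_of_nonneg hα, ← sub_eq_add_neg] using
      le_quadratic_of_fderivWithin_lipschitz_segment
        (fun z hz => (hf z (hseg hz)).mono hseg) (fun z hz => hlip z (hseg hz) x hx)
  calc f (x - α • d) - f x ≤ α * -f' x d + G / 2 * (α * ‖d‖) ^ 2 := by linarith
    _ ≤ α * ε + G / 2 * (α * C) ^ 2 := by
      gcongr
      exact neg_le.1 hfeas
    _ = α * ε + G * α ^ 2 * C ^ 2 / 2 := by ring

theorem cumulative_preservation_bound_general {s : Set E} (hs : Convex ℝ s) (hG : 0 ≤ G)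
    (hf : ∀ x ∈ s, HasFDerivWithinAt f (f' x) s x)
    (hlip : ∀ x ∈ s, ∀ y ∈ s, ‖f' x - f' y‖ ≤ G * ‖x - y‖)
    {α ε C : ℝ} (hα : 0 ≤ α) {θ d : ℕ → E} (hθ : ∀ t, θ t ∈ s)
    (hupd : ∀ t, θ (t + 1) = θ t - α • d t)
    (hfeas : ∀ t, -ε ≤ f' (θ t) (d t)) (hbdd : ∀ t, ‖d t‖ ≤ C) (T : ℕ) :
    f (θ T) - f (θ 0) ≤ T * (α * ε + G * α ^ 2 * C ^ 2 / 2) := by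
  have hstep (t : ℕ) : f (θ (t + 1)) - f (θ t) ≤ α * ε + G * α ^ 2 * C ^ 2 / 2 := by
    have hnext := hθ (t + 1)
    rw [hupd] at hnext ⊢
    exact sub_smul_sub_le_of_neg_le_fderivWithin hs hG hf hlip hα (hθ t) hnext (hfeas t) (hbdd t)
  calc f (θ T) - f (θ 0) = ∑ t ∈ Finset.range T, (f (θ (t + 1)) - f (θ t)) :=
        (Finset.sum_range_sub (fun t => f (θ t)) T).symm
    _ ≤ (Finset.range T).card • (α * ε + G * α ^ 2 * C ^ 2 / 2) :=
        Finset.sum_le_card_nsmul _ _ _ fun t _ => hstep t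
    _ = T * (α * ε + G * α ^ 2 * C ^ 2 / 2) := by rw [Finset.card_range, nsmul_eq_mul]

end NormedSpace

/-- Cumulative preservation-degradation bound: under the updates
`θ_{t+1} = θ_t − α•d_t` with `⟪∇f(θ_t), d_t⟫ ≥ −ε` and `‖d_t‖ ≤ C`, one has
`f(θ_T) − f(θ_0) ≤ T(αε + Gα²C²/2)` for every `T`. -/
theorem cumulative_preservation_bound
    {E : Type*} [NormedAddCommGroup E] [InnerProductSpace ℝ E] [CompleteSpace E]
    (f : E → ℝ) (f' : E → E) (G : ℝ) (hG : 0 ≤ G)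
    (hdiff : ∀ x, HasGradientAt f (f' x) x)
    (hlip : ∀ x y, ‖f' x - f' y‖ ≤ G * ‖x - y‖)
    (α : ℝ) (hα : 0 ≤ α) (ε C : ℝ) (hC : 0 ≤ C)
    (θ d : ℕ → E)
    (hupd : ∀ t, θ (t + 1) = θ t - α • d t)
    (hfeas : ∀ t, ⟪f' (θ t), d t⟫ ≥ -ε)
    (hbdd : ∀ t, ‖d t‖ ≤ C) :
    ∀ T : ℕ, f (θ T) - f (θ 0) ≤ T * (α * ε + G * α ^ 2 * C ^ 2 / 2) :=
  cumulative_preservation_bound_general (f' := fun x => InnerProductSpace.toDual ℝ E (f' x))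
    convex_univ hG (fun x _ => (hdiff x).hasFDerivAt.hasFDerivWithinAt)
    (fun x _ y _ => by simpa only [← map_sub, LinearIsometryEquiv.norm_map] using hlip x y)
    hα (fun _ => Set.mem_univ _) hupd hfeas hbdd
end

section
/- Let f, g : E → ℝ be differentiable on a real Hilbert space E, each with G-Lipschitz gradient (G ≥ 0). Let D ≥ 0, let α > 0 satisfy c := 1 − α·G·(1 + D)/2 > 0, and let θ : ℕ → E and λ : ℕ → ℝ be sequences with 0 ≤ λ_t ≤ D for all t. Define d_t = ∇f(θ_t) + λ_t·∇g(θ_t) and suppose θ_{t+1} = θ_t − α·d_t for all t. Then for every T ≥ 1: c·α·Σ_{t=1}^{T} ‖d_t‖² ≤ (f(θ_1) + λ_1·g(θ_1)) − (f(θ_{T+1}) + λ_{T+1}·g(θ_{T+1})) + Σ_{t=1}^{T} (λ_{t+1} − λ_t)·g(θ_{t+1}). -/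
open RealInnerProductSpace

/-!
The Lagrangian `J_t = f + λ_t g` has a `G (1 + D)`-Lipschitz gradient, so by the descent lemma the
step `θ_t ↦ θ_{t+1} = θ_t - α ∇J_t(θ_t)` decreases `J_t` by at least `c α ‖d_t‖²`. The sum of these
decreases fails to telescope only because the multiplier moves between steps, and
`J_{t+1}(θ_{t+1}) - J_t(θ_{t+1}) = (λ_{t+1} - λ_t) g(θ_{t+1})` is the resulting drift.
-/

theorem image_le_quadratic_of_deriv_right_le_affine {φ φ' : ℝ → ℝ} {a b p K : ℝ} (hab : a ≤ b)
    (hφ : ContinuousOn φ (Set.Icc a b))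
    (hφ' : ∀ s ∈ Set.Ico a b, HasDerivWithinAt φ (φ' s) (Set.Ici s) s)
    (hle : ∀ s ∈ Set.Ico a b, φ' s ≤ p + K * (s - a)) :
    φ b ≤ φ a + p * (b - a) + K / 2 * (b - a) ^ 2 := by
  let q : ℝ → ℝ := fun s ↦ φ a + p * (s - a) + K / 2 * (s - a) ^ 2
  have hq : ∀ s, HasDerivAt q (p + K * (s - a)) s := by
    intro s
    have hsub : HasDerivAt (fun s ↦ s - a) 1 s := (hasDerivAt_id s).sub_const a
    refine (((hsub.const_mul p).const_add (φ a)).add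
      ((hsub.pow 2).const_mul (K / 2))).congr_deriv ?_
    norm_num
    ring
  exact image_le_of_deriv_right_le_deriv_boundary hφ hφ' (by simp [q])
    (fun s _ ↦ (hq s).continuousAt.continuousWithinAt) (fun s _ ↦ (hq s).hasDerivWithinAt) hle
    (Set.right_mem_Icc.mpr hab)

theorem le_add_fderiv_add_sq_of_lipschitz_on_segment
    {E : Type*} [NormedAddCommGroup E] [NormedSpace ℝ E]
    {f : E → ℝ} {f' : E → StrongDual ℝ E} {L : ℝ} {x y : E}
    (hf : ∀ z ∈ segment ℝ x y, HasFDerivAt f (f' z) z)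
    (hf_lip : ∀ z ∈ segment ℝ x y, ‖f' z - f' x‖ ≤ L * ‖z - x‖) :
    f y ≤ f x + f' x (y - x) + L / 2 * ‖y - x‖ ^ 2 := by
  let γ : ℝ → E := AffineMap.lineMap x y
  have hγ_mem : ∀ s ∈ Set.Icc (0 : ℝ) 1, γ s ∈ segment ℝ x y :=
    fun _ hs ↦ lineMap_mem_segment ℝ x y hs
  have hline : ∀ s ∈ Set.Icc (0 : ℝ) 1, HasDerivAt (f ∘ γ) (f' (γ s) (y - x)) s := fun s hs ↦
    (hf _ (hγ_mem s hs)).comp_hasDerivAt s AffineMap.hasDerivAt_lineMap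
  have hslope : ∀ s ∈ Set.Icc (0 : ℝ) 1,
      f' (γ s) (y - x) ≤ f' x (y - x) + L * ‖y - x‖ ^ 2 * (s - 0) := by
    intro s hs
    have hdist : ‖γ s - x‖ = s * ‖y - x‖ := by
      rw [← dist_eq_norm, dist_lineMap_left, Real.norm_of_nonneg hs.1, dist_eq_norm']
    rw [← sub_le_iff_le_add', ← sub_apply]
    calc (f' (γ s) - f' x) (y - x)
        ≤ ‖f' (γ s) - f' x‖ * ‖y - x‖ :=
          (Real.le_norm_self _).trans (ContinuousLinearMap.le_opNorm _ _)
      _ ≤ L * ‖γ s - x‖ * ‖y - x‖ := by gcongr; exact hf_lip _ (hγ_mem s hs)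
      _ = L * ‖y - x‖ ^ 2 * (s - 0) := by rw [hdist]; ring
  have hle := image_le_quadratic_of_deriv_right_le_affine zero_le_one
    (fun s hs ↦ (hline s hs).continuousAt.continuousWithinAt)
    (fun s hs ↦ (hline s (Set.Ico_subset_Icc_self hs)).hasDerivWithinAt)
    (fun s hs ↦ hslope s (Set.Ico_subset_Icc_self hs))
  simpa [γ, mul_div_right_comm] using hle

section GradientStep

/- Gradients are encoded as `HasFDerivAt f (innerSL ℝ (f' x)) x`, because `HasGradientAt` is only
available in complete spaces. -/
variable {E : Type*} [NormedAddCommGroup E] [InnerProductSpace ℝ E]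

theorem apply_sub_smul_gradient_le {f : E → ℝ} {f' : E → E} {L : ℝ} {x : E}
    (hf : ∀ y, HasFDerivAt f (innerSL ℝ (f' y)) y)
    (hf_lip : ∀ y, ‖f' y - f' x‖ ≤ L * ‖y - x‖) (α : ℝ) :
    f (x - α • f' x) ≤ f x - (1 - α * L / 2) * α * ‖f' x‖ ^ 2 := by
  calc f (x - α • f' x)
      ≤ f x + ⟪f' x, x - α • f' x - x⟫ + L / 2 * ‖x - α • f' x - x‖ ^ 2 :=
        le_add_fderiv_add_sq_of_lipschitz_on_segment (fun z _ ↦ hf z) fun z _ ↦ by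
          rw [← map_sub, innerSL_apply_norm]
          exact hf_lip z
    _ = f x - (1 - α * L / 2) * α * ‖f' x‖ ^ 2 := by
        rw [sub_sub_cancel_left, inner_neg_right, real_inner_smul_right,
          real_inner_self_eq_norm_sq, norm_neg, norm_smul, mul_pow, Real.norm_eq_abs, sq_abs]
        ring

theorem sum_norm_gradient_sq_le_of_time_varying {J : ℕ → E → ℝ} {J' : ℕ → E → E} {L α : ℝ}
    {θ : ℕ → E} (hJ : ∀ t x, HasFDerivAt (J t) (innerSL ℝ (J' t x)) x)
    (hJ_lip : ∀ t x y, ‖J' t x - J' t y‖ ≤ L * ‖x - y‖)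
    (hθ : ∀ t, θ (t + 1) = θ t - α • J' t (θ t)) {m n : ℕ} (hmn : m ≤ n) :
    (1 - α * L / 2) * α * ∑ t ∈ Finset.Ico m n, ‖J' t (θ t)‖ ^ 2
      ≤ J m (θ m) - J n (θ n)
          + ∑ t ∈ Finset.Ico m n, (J (t + 1) (θ (t + 1)) - J t (θ (t + 1))) := by
  have hstep : ∀ t, (1 - α * L / 2) * α * ‖J' t (θ t)‖ ^ 2 ≤ J t (θ t) - J t (θ (t + 1)) := by
    intro t
    rw [hθ t, le_sub_comm]
    exact apply_sub_smul_gradient_le (hJ t) (fun y ↦ hJ_lip t y (θ t)) α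
  calc (1 - α * L / 2) * α * ∑ t ∈ Finset.Ico m n, ‖J' t (θ t)‖ ^ 2
      ≤ ∑ t ∈ Finset.Ico m n, (J t (θ t) - J t (θ (t + 1))) := by
        rw [Finset.mul_sum]
        exact Finset.sum_le_sum fun t _ ↦ hstep t
    _ = -∑ t ∈ Finset.Ico m n, (J (t + 1) (θ (t + 1)) - J t (θ t))
          + ∑ t ∈ Finset.Ico m n, (J (t + 1) (θ (t + 1)) - J t (θ (t + 1))) := by
        rw [← Finset.sum_neg_distrib, ← Finset.sum_add_distrib]
        exact Finset.sum_congr rfl fun t _ ↦ by ring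
    _ = J m (θ m) - J n (θ n)
          + ∑ t ∈ Finset.Ico m n, (J (t + 1) (θ (t + 1)) - J t (θ (t + 1))) := by
        rw [Finset.sum_Ico_sub (fun t ↦ J t (θ t)) hmn, neg_sub]

end GradientStep

theorem norm_add_smul_sub_add_smul_le
    {X E : Type*} [SeminormedAddCommGroup X] [SeminormedAddCommGroup E] [NormedSpace ℝ E]
    {u v : X → E} {G D a : ℝ}
    (hu : ∀ x y, ‖u x - u y‖ ≤ G * ‖x - y‖) (hv : ∀ x y, ‖v x - v y‖ ≤ G * ‖x - y‖)
    (ha : |a| ≤ D) (x y : X) :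
    ‖(u x + a • v x) - (u y + a • v y)‖ ≤ G * (1 + D) * ‖x - y‖ := by
  have hD : 0 ≤ D := (abs_nonneg a).trans ha
  calc ‖(u x + a • v x) - (u y + a • v y)‖
      = ‖(u x - u y) + a • (v x - v y)‖ := by rw [smul_sub, add_sub_add_comm]
    _ ≤ ‖u x - u y‖ + |a| * ‖v x - v y‖ := by
        rw [← Real.norm_eq_abs, ← norm_smul]
        exact norm_add_le _ _
    _ ≤ G * ‖x - y‖ + D * (G * ‖x - y‖) := by
        gcongr
        exacts [hu x y, hv x y]
    _ = G * (1 + D) * ‖x - y‖ := by ring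

theorem summed_descent_inequality_general
    {E : Type*} [NormedAddCommGroup E] [InnerProductSpace ℝ E]
    {f g : E → ℝ} {f' g' : E → E} {G D α : ℝ} {θ d : ℕ → E} {lam : ℕ → ℝ}
    (hf : ∀ x, HasFDerivAt f (innerSL ℝ (f' x)) x)
    (hg : ∀ x, HasFDerivAt g (innerSL ℝ (g' x)) x)
    (hf_lip : ∀ x y, ‖f' x - f' y‖ ≤ G * ‖x - y‖)
    (hg_lip : ∀ x y, ‖g' x - g' y‖ ≤ G * ‖x - y‖)
    (hlam : ∀ t, |lam t| ≤ D)
    (hd : ∀ t, d t = f' (θ t) + lam t • g' (θ t))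
    (hupd : ∀ t, θ (t + 1) = θ t - α • d t) (T : ℕ) :
    (1 - α * G * (1 + D) / 2) * α * ∑ t ∈ Finset.Icc 1 T, ‖d t‖ ^ 2
      ≤ (f (θ 1) + lam 1 * g (θ 1)) - (f (θ (T + 1)) + lam (T + 1) * g (θ (T + 1)))
          + ∑ t ∈ Finset.Icc 1 T, (lam (t + 1) - lam t) * g (θ (t + 1)) := by
  let J : ℕ → E → ℝ := fun t x ↦ f x + lam t * g x
  let J' : ℕ → E → E := fun t x ↦ f' x + lam t • g' x
  have hJ : ∀ t x, HasFDerivAt (J t) (innerSL ℝ (J' t x)) x := fun t x ↦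
    ((hf x).add ((hg x).const_mul (lam t))).congr_fderiv (by simp [J'])
  have hJ_lip : ∀ t x y, ‖J' t x - J' t y‖ ≤ G * (1 + D) * ‖x - y‖ := fun t ↦
    norm_add_smul_sub_add_smul_le hf_lip hg_lip (hlam t)
  have hθ : ∀ t, θ (t + 1) = θ t - α • J' t (θ t) := fun t ↦ by rw [hupd t, hd t]
  have hdrift : ∀ t x, J (t + 1) x - J t x = (lam (t + 1) - lam t) * g x := fun t x ↦ by
    simp only [J]
    ring
  have hsum := sum_norm_gradient_sq_le_of_time_varying hJ hJ_lip hθ (Nat.le_add_left 1 T)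
  simpa only [Finset.Ico_add_one_right_eq_Icc, hdrift, ← hd, ← mul_assoc, J, J'] using hsum

/-- Summed descent inequality from the proof of Theorem C.4 (Pareto Stationarity):
with `d_t = ∇f(θ_t) + λ_t ∇g(θ_t)`, updates `θ_{t+1} = θ_t − α d_t`,
`0 ≤ λ_t ≤ D`, and `c = 1 − αG(1+D)/2 > 0`, one has for every `T ≥ 1`
`cα Σ_{t=1}^T ‖d_t‖² ≤ J_1(θ_1) − J_{T+1}(θ_{T+1}) + Σ_{t=1}^T (λ_{t+1} − λ_t) g(θ_{t+1})`. -/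
theorem summed_descent_inequality
    {E : Type*} [NormedAddCommGroup E] [InnerProductSpace ℝ E] [CompleteSpace E]
    (f g : E → ℝ) (f' g' : E → E) (G : ℝ) (hG : 0 ≤ G)
    (hf : ∀ x, HasGradientAt f (f' x) x)
    (hg : ∀ x, HasGradientAt g (g' x) x)
    (hf_lip : ∀ x y, ‖f' x - f' y‖ ≤ G * ‖x - y‖)
    (hg_lip : ∀ x y, ‖g' x - g' y‖ ≤ G * ‖x - y‖)
    (D : ℝ) (hD : 0 ≤ D)
    (α c : ℝ) (hα : 0 < α) (hc : c = 1 - α * G * (1 + D) / 2) (hc_pos : 0 < c)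
    (θ : ℕ → E) (lam : ℕ → ℝ)
    (hlam : ∀ t, lam t ∈ Set.Icc 0 D)
    (d : ℕ → E) (hd : ∀ t, d t = f' (θ t) + lam t • g' (θ t))
    (hupd : ∀ t, θ (t + 1) = θ t - α • d t) :
    ∀ T : ℕ, 1 ≤ T →
      c * α * ∑ t ∈ Finset.Icc 1 T, ‖d t‖ ^ 2
        ≤ (f (θ 1) + lam 1 * g (θ 1)) - (f (θ (T + 1)) + lam (T + 1) * g (θ (T + 1)))
            + ∑ t ∈ Finset.Icc 1 T, (lam (t + 1) - lam t) * g (θ (t + 1)) := by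
  subst hc
  exact fun T _ ↦ summed_descent_inequality_general (fun x ↦ (hf x).hasFDerivAt)
    (fun x ↦ (hg x).hasFDerivAt) hf_lip hg_lip
    (fun t ↦ (abs_of_nonneg (hlam t).1).trans_le (hlam t).2) hd hupd T
end
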